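/- arXiv:2007.02059 — 2 statements merged into one kernel-verified Lean document; each statement's English description precedes it below -/
import Mathlib

section
/- For every Gallai coloring of a finite complete graph on at least two vertices, there exists a partition of the vertex set into at least two nonempty parts such that: for every pair of distinct parts, all edges between the two parts receive the same color, and at most two colors in total appear on edges between different parts. -/
/-- A symmetric edge-coloring function on the complete graph on `Fin n`. -/
def IsSym {n : ℕ} {α : Type*} (c : Fin n → Fin n → α) : Prop :=
  ∀ u v : Fin n, c u v = c v u

/-- A Gallai coloring: no triangle whose three edges get three distinct colors. -/
def NoRainbowTriangle {n : ℕ} {α : Type*} (c : Fin n → Fin n → α) : Prop :=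
  ∀ u v w : Fin n, u ≠ v → u ≠ w → v ≠ w →
    c u v = c u w ∨ c u v = c v w ∨ c u w = c v w

/-- There is a monochromatic triangle in color `i`. -/
def HasMonoK3 {n : ℕ} {α : Type*} (c : Fin n → Fin n → α) (i : α) : Prop :=
  ∃ a b d : Fin n, a ≠ b ∧ a ≠ d ∧ b ≠ d ∧
    c a b = i ∧ c a d = i ∧ c b d = i

/-- There is a monochromatic copy of `K₄⁺ = K₁ ∨ (K₃ + K₁)` in color `i`:
a vertex `x` joined to all of `a, b, d, e`, where `a b d` is a triangle
(equivalently `K₄` on `{x,a,b,d}` together with a pendant edge `x e`). -/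
def HasMonoK4plus {n : ℕ} {α : Type*} (c : Fin n → Fin n → α) (i : α) : Prop :=
  ∃ x a b d e : Fin n,
    x ≠ a ∧ x ≠ b ∧ x ≠ d ∧ x ≠ e ∧ a ≠ b ∧ a ≠ d ∧ a ≠ e ∧ b ≠ d ∧ b ≠ e ∧ d ≠ e ∧
    c x a = i ∧ c x b = i ∧ c x d = i ∧ c x e = i ∧
    c a b = i ∧ c a d = i ∧ c b d = i

/-!
Take a set `T` of colors and let `G` be the graph of the edges with color in `T`. In a Gallai
coloring, the color of an edge `xz` with `z` outside the component of `x` does not change when `x`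
moves along an edge of `G`, since that edge has a color in `T` while the two edges to `z` do not.
So the components of `G` form a homogeneous partition, and it remains to find two colors `i, j`
such that the edges with color outside `{i, j}` form a disconnected graph.

This goes by induction on the number of vertices. Remove a vertex `v` and take `i, j` that work for
the remaining vertices. If they do not work for all vertices, then `v` is a cut vertex of the graph
`G` for `T = {i, j}ᶜ`. Every component of `G - v` contains a `G`-neighbor of `v`, which forces all
edges at `v` with color in `T` to share a color, and all edges at `v` with color outside `T` to
share a color. These two colors cut `v` off from all other vertices.
-/

/-- A Gallai coloring of the complete graph on `V`: no triangle has three distinct colors. A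
coloring is encoded as a function on `Sym2 V`, whose values on the diagonal are irrelevant. -/
def IsGallai {V α : Type*} (c : Sym2 V → α) : Prop :=
  ∀ ⦃u v w : V⦄, u ≠ v → u ≠ w → v ≠ w →
    c s(u, v) = c s(u, w) ∨ c s(u, v) = c s(v, w) ∨ c s(u, w) = c s(v, w)

/-- The graph on `V` formed by the edges whose color lies in `T`. Its connected components are the
parts of the Gallai partition when the complement of `T` consists of two suitable colors. -/
def colorGraph {V α : Type*} (c : Sym2 V → α) (T : Set α) : SimpleGraph V :=
  SimpleGraph.fromEdgeSet (c ⁻¹' T)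

/-- The coloring obtained from `c` by removing the vertex `v`. -/
def deleteVertex {V α : Type*} (c : Sym2 V → α) (v : V) : Sym2 ({v}ᶜ : Set V) → α :=
  c ∘ Sym2.map Subtype.val

section

variable {V α : Type*} {c : Sym2 V → α} {T : Set α} {v : V}

theorem colorGraph_adj {x y : V} : (colorGraph c T).Adj x y ↔ c s(x, y) ∈ T ∧ x ≠ y :=
  SimpleGraph.fromEdgeSet_adj _

theorem color_notMem_of_not_reachable {x y : V} (h : ¬(colorGraph c T).Reachable x y) :
    c s(x, y) ∉ T := fun hT =>
  h (colorGraph_adj.2 ⟨hT, fun hxy => h (hxy ▸ .rfl)⟩).reachable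

theorem not_preconnected_colorGraph_compl [Nontrivial V] (hv : ∀ x ≠ v, c s(v, x) ∈ T) :
    ¬(colorGraph c Tᶜ).Preconnected := fun h => by
  obtain ⟨x, hx⟩ := h.exists_adj_of_nontrivial v
  obtain ⟨hxT, hvx⟩ := colorGraph_adj.1 hx
  exact hxT (hv x hvx.symm)

theorem deleteVertex_mk (x y : ({v}ᶜ : Set V)) : deleteVertex c v s(x, y) = c s(x.1, y.1) :=
  rfl

theorem colorGraph_deleteVertex :
    colorGraph (deleteVertex c v) T = (colorGraph c T).induce {v}ᶜ := by
  ext x y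
  simp only [colorGraph_adj, deleteVertex_mk, SimpleGraph.comap_adj,
    Function.Embedding.subtype_apply, ne_eq, Subtype.ext_iff]

theorem exists_reachable_deleteVertex_color_mem (hG : (colorGraph c T).Preconnected)
    (x : ({v}ᶜ : Set V)) :
    ∃ y : ({v}ᶜ : Set V), (colorGraph (deleteVertex c v) T).Reachable x y ∧ c s(v, y) ∈ T := by
  rw [colorGraph_deleteVertex]
  obtain ⟨⟨y, w⟩, ⟨hy, hyx⟩, rfl, hyw⟩ :=
    ((colorGraph c T).componentComplMk x.2).exists_adj_boundary_pair hG (Set.singleton_nonempty v)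
  exact ⟨⟨y, hy⟩, (SimpleGraph.ConnectedComponent.exact hyx).symm, (colorGraph_adj.1 hyw.symm).1⟩

theorem exists_not_reachable {G : SimpleGraph V} (hG : ¬G.Preconnected) (x : V) :
    ∃ y, ¬G.Reachable x y := by
  by_contra! h
  exact hG fun y z => (h y).symm.trans (h z)

namespace IsGallai

theorem color_eq_of_reachable (hc : IsGallai c) {x y z : V}
    (hxy : (colorGraph c T).Reachable x y) (hxz : ¬(colorGraph c T).Reachable x z) :
    c s(x, z) = c s(y, z) := by
  obtain ⟨p⟩ := hxy
  induction p with
  | nil => rfl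
  | @cons x w _ hxw _ ih =>
    have hwz : ¬(colorGraph c T).Reachable w z := fun h => hxz (hxw.reachable.trans h)
    rw [← ih hwz]
    obtain ⟨hT, hne⟩ := colorGraph_adj.1 hxw
    have hxz_notMem := color_notMem_of_not_reachable hxz
    have hwz_notMem := color_notMem_of_not_reachable hwz
    rcases hc hne (fun h => hxz (h ▸ .rfl)) (fun h => hwz (h ▸ .rfl)) with h | h | h
    · exact absurd (h ▸ hT) hxz_notMem
    · exact absurd (h ▸ hT) hwz_notMem
    · exact h

theorem color_eq_of_reachable_of_reachable (hc : IsGallai c) {x x' y y' : V}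
    (hx : (colorGraph c T).Reachable x x') (hy : (colorGraph c T).Reachable y y')
    (hxy : ¬(colorGraph c T).Reachable x y) : c s(x, y) = c s(x', y') := by
  have hyx' : ¬(colorGraph c T).Reachable y x' := fun h => hxy (hx.trans h.symm)
  rw [hc.color_eq_of_reachable hx hxy, Sym2.eq_swap, hc.color_eq_of_reachable hy hyx',
    Sym2.eq_swap]

protected theorem deleteVertex (hc : IsGallai c) (v : V) : IsGallai (deleteVertex c v) :=
  fun _ _ _ hxy hxz hyz =>
    hc (Subtype.coe_ne_coe.2 hxy) (Subtype.coe_ne_coe.2 hxz) (Subtype.coe_ne_coe.2 hyz)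

theorem color_eq_of_mem_of_not_reachable (hc : IsGallai c) {x y : ({v}ᶜ : Set V)}
    (hx : c s(v, x) ∈ T) (hy : c s(v, y) ∈ T)
    (hxy : ¬(colorGraph (deleteVertex c v) T).Reachable x y) :
    c s(v, x) = c s(v, y) := by
  have hxyT : c s(x.1, y.1) ∉ T :=
    color_notMem_of_not_reachable (c := deleteVertex c v) hxy
  have hne : x.1 ≠ y.1 := fun h => hxy (Subtype.ext h ▸ .rfl)
  rcases hc (Ne.symm x.2) (Ne.symm y.2) hne with h | h | h
  · exact h
  · exact absurd (h ▸ hx) hxyT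
  · exact absurd (h ▸ hy) hxyT

theorem cutVertex_color_eq_of_mem (hc : IsGallai c) (hG : (colorGraph c T).Preconnected)
    (hcut : ¬(colorGraph (deleteVertex c v) T).Preconnected) {x y : ({v}ᶜ : Set V)}
    (hx : c s(v, x) ∈ T) (hy : c s(v, y) ∈ T) : c s(v, x) = c s(v, y) := by
  by_cases hxy : (colorGraph (deleteVertex c v) T).Reachable x y
  · obtain ⟨z, hxz⟩ := exists_not_reachable hcut x
    obtain ⟨w, hzw, hw⟩ := exists_reachable_deleteVertex_color_mem hG z
    have hxw : ¬(colorGraph (deleteVertex c v) T).Reachable x w :=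
      fun h => hxz (h.trans hzw.symm)
    exact (hc.color_eq_of_mem_of_not_reachable hx hw hxw).trans
      (hc.color_eq_of_mem_of_not_reachable hy hw fun h => hxw (hxy.trans h)).symm
  · exact hc.color_eq_of_mem_of_not_reachable hx hy hxy

theorem color_eq_of_notMem_of_not_reachable (hc : IsGallai c)
    (hG : (colorGraph c T).Preconnected) {x y : ({v}ᶜ : Set V)} (hx : c s(v, x) ∉ T)
    (hxy : ¬(colorGraph (deleteVertex c v) T).Reachable x y) :
    c s(x.1, y.1) = c s(v, x) := by
  obtain ⟨w, hyw, hw⟩ := exists_reachable_deleteVertex_color_mem hG y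
  have hxw : ¬(colorGraph (deleteVertex c v) T).Reachable x w :=
    fun h => hxy (h.trans hyw.symm)
  have hxwT : c s(x.1, w.1) ∉ T :=
    color_notMem_of_not_reachable (c := deleteVertex c v) hxw
  have hne : x.1 ≠ w.1 := fun h => hxw (Subtype.ext h ▸ .rfl)
  calc
    c s(x.1, y.1) = c s(x.1, w.1) :=
      (hc.deleteVertex v).color_eq_of_reachable_of_reachable .rfl hyw hxy
    _ = c s(v, x) := by
      rcases hc (Ne.symm x.2) (Ne.symm w.2) hne with h | h | h
      · exact absurd (h ▸ hw) hx
      · exact h.symm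
      · exact absurd (h ▸ hw) hxwT

theorem cutVertex_color_eq_of_notMem (hc : IsGallai c) (hG : (colorGraph c T).Preconnected)
    (hcut : ¬(colorGraph (deleteVertex c v) T).Preconnected) {x y : ({v}ᶜ : Set V)}
    (hx : c s(v, x) ∉ T) (hy : c s(v, y) ∉ T) : c s(v, x) = c s(v, y) := by
  by_cases hxy : (colorGraph (deleteVertex c v) T).Reachable x y
  · obtain ⟨z, hxz⟩ := exists_not_reachable hcut x
    have hyz : ¬(colorGraph (deleteVertex c v) T).Reachable y z :=
      fun h => hxz (hxy.trans h)
    calc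
      c s(v, x) = c s(x.1, z.1) := (hc.color_eq_of_notMem_of_not_reachable hG hx hxz).symm
      _ = c s(y.1, z.1) := (hc.deleteVertex v).color_eq_of_reachable hxy hxz
      _ = c s(v, y) := hc.color_eq_of_notMem_of_not_reachable hG hy hyz
  · calc
      c s(v, x) = c s(x.1, y.1) := (hc.color_eq_of_notMem_of_not_reachable hG hx hxy).symm
      _ = c s(y.1, x.1) := by rw [Sym2.eq_swap]
      _ = c s(v, y) := hc.color_eq_of_notMem_of_not_reachable hG hy fun h => hxy h.symm

theorem cutVertex_exists_pair_forall_color_mem (hc : IsGallai c)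
    (hG : (colorGraph c T).Preconnected)
    (hcut : ¬(colorGraph (deleteVertex c v) T).Preconnected) :
    ∃ i j, ∀ x ≠ v, c s(v, x) ∈ ({i, j} : Set α) := by
  obtain ⟨z, -⟩ := not_forall.1 hcut
  obtain ⟨a, -, ha⟩ := exists_reachable_deleteVertex_color_mem hG z
  by_cases h : ∃ b : ({v}ᶜ : Set V), c s(v, b) ∉ T
  · obtain ⟨b, hb⟩ := h
    refine ⟨c s(v, a), c s(v, b), fun x hx => ?_⟩
    by_cases hxT : c s(v, x) ∈ T
    · exact .inl (hc.cutVertex_color_eq_of_mem hG hcut (x := ⟨x, hx⟩) hxT ha)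
    · exact .inr (hc.cutVertex_color_eq_of_notMem hG hcut (x := ⟨x, hx⟩) hxT hb)
  · push Not at h
    exact ⟨c s(v, a), c s(v, a), fun x hx =>
      .inl (hc.cutVertex_color_eq_of_mem hG hcut (x := ⟨x, hx⟩) (h ⟨x, hx⟩) ha)⟩

theorem exists_pair_not_preconnected [Finite V] [Nontrivial V] (hc : IsGallai c) :
    ∃ i j, ¬(colorGraph c {i, j}ᶜ).Preconnected := by
  induction hn : Nat.card V using Nat.strong_induction_on generalizing V with
  | _ n ih =>
    obtain ⟨v, w, hvw⟩ := exists_pair_ne V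
    rcases subsingleton_or_nontrivial ({v}ᶜ : Set V) with hsub | hnontriv
    · refine ⟨c s(v, w), c s(v, w), not_preconnected_colorGraph_compl (v := v) fun x hx => ?_⟩
      obtain rfl : x = w := congrArg Subtype.val (hsub.elim ⟨x, hx⟩ ⟨w, hvw.symm⟩)
      exact .inl rfl
    · have hcard : Nat.card ({v}ᶜ : Set V) < n := hn ▸ Finite.card_subtype_lt (x := v) (by simp)
      obtain ⟨i, j, hcut⟩ := ih _ hcard (hc.deleteVertex v) rfl
      by_cases hG : (colorGraph c {i, j}ᶜ).Preconnected
      · obtain ⟨k, l, hkl⟩ := hc.cutVertex_exists_pair_forall_color_mem hG hcut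
        exact ⟨k, l, not_preconnected_colorGraph_compl hkl⟩
      · exact ⟨i, j, hG⟩

end IsGallai

theorem mem_iff_rel_of_mem_parts_ofSetoid [Fintype V] [DecidableEq V] {s : Setoid V}
    [DecidableRel s.r] {A : Finset V} (hA : A ∈ (Finpartition.ofSetoid s).parts) {a b : V}
    (ha : a ∈ A) : b ∈ A ↔ s a b := by
  rw [← Finpartition.part_eq_of_mem _ hA ha, Finpartition.mem_part_ofSetoid_iff_rel]

theorem one_lt_card_parts_ofSetoid [Fintype V] [DecidableEq V] {s : Setoid V}
    [DecidableRel s.r] {a b : V} (hab : ¬s a b) :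
    1 < (Finpartition.ofSetoid s).parts.card := by
  let P := Finpartition.ofSetoid s
  refine Finset.one_lt_card.2 ⟨P.part a, P.part_mem.2 (Finset.mem_univ a), P.part b,
    P.part_mem.2 (Finset.mem_univ b), fun h => hab ?_⟩
  rw [← Finpartition.mem_part_ofSetoid_iff_rel]
  exact h ▸ P.mem_part (Finset.mem_univ b)

theorem gallai_partition_general [Fintype V] [DecidableEq V] [Nontrivial V] (hc : IsGallai c) :
    ∃ P : Finpartition (Finset.univ : Finset V),
      2 ≤ P.parts.card ∧
      (∀ A ∈ P.parts, ∀ B ∈ P.parts, A ≠ B → ∃ i, ∀ a ∈ A, ∀ b ∈ B, c s(a, b) = i) ∧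
      (∃ i j, ∀ A ∈ P.parts, ∀ B ∈ P.parts, A ≠ B →
        ∀ a ∈ A, ∀ b ∈ B, c s(a, b) = i ∨ c s(a, b) = j) := by
  classical
  obtain ⟨i, j, hG⟩ := hc.exists_pair_not_preconnected
  let P := Finpartition.ofSetoid (colorGraph c {i, j}ᶜ).reachableSetoid
  have hsep : ∀ A ∈ P.parts, ∀ B ∈ P.parts, A ≠ B → ∀ a ∈ A, ∀ b ∈ B,
      ¬(colorGraph c {i, j}ᶜ).Reachable a b := fun A hA B hB hAB a ha b hb hab =>
    hAB (P.eq_of_mem_parts hA hB ((mem_iff_rel_of_mem_parts_ofSetoid hA ha).2 hab) hb)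
  refine ⟨P, ?_, fun A hA B hB hAB => ?_, i, j, fun A hA B hB hAB a ha b hb => ?_⟩
  · obtain ⟨b, hab⟩ := exists_not_reachable hG (Classical.arbitrary V)
    exact one_lt_card_parts_ofSetoid hab
  · obtain ⟨x, hx⟩ := P.nonempty_of_mem_parts hA
    obtain ⟨y, hy⟩ := P.nonempty_of_mem_parts hB
    exact ⟨c s(x, y), fun a ha b hb => hc.color_eq_of_reachable_of_reachable
      ((mem_iff_rel_of_mem_parts_ofSetoid hA ha).1 hx)
      ((mem_iff_rel_of_mem_parts_ofSetoid hB hb).1 hy) (hsep A hA B hB hAB a ha b hb)⟩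
  · exact Set.notMem_compl_iff.1 (color_notMem_of_not_reachable (hsep A hA B hB hAB a ha b hb))

end

theorem gallai_partition {n : ℕ} {α : Type*} (hn : 2 ≤ n)
    (c : Fin n → Fin n → α) (hsym : IsSym c) (hG : NoRainbowTriangle c) :
    ∃ P : Finpartition (Finset.univ : Finset (Fin n)),
      2 ≤ P.parts.card ∧
      (∀ A ∈ P.parts, ∀ B ∈ P.parts, A ≠ B →
        ∃ i : α, ∀ a ∈ A, ∀ b ∈ B, c a b = i) ∧
      (∃ i j : α, ∀ A ∈ P.parts, ∀ B ∈ P.parts, A ≠ B →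
        ∀ a ∈ A, ∀ b ∈ B, c a b = i ∨ c a b = j) := by
  have : Nontrivial (Fin n) := Fin.nontrivial_iff_two_le.2 hn
  exact gallai_partition_general (c := Sym2.lift ⟨c, hsym⟩) hG
end

section
/- For all integers k ≥ 3 and 1 ≤ s ≤ k−1, one has 8·f(k−2, s−1) ≤ f(k, s). -/
/-- The function `f(k,s)` from the paper (for `1 ≤ k` and `s ≤ k`). -/
def f (k s : ℕ) : ℕ :=
  if Even s ∧ Even (k - s) then 17 ^ (s / 2) * 5 ^ ((k - s) / 2)
  else if Even s then 2 * 17 ^ (s / 2) * 5 ^ ((k - s - 1) / 2)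
  else if s = k then 4 * 17 ^ ((k - 1) / 2)
  else if Odd (k - s) then 8 * 17 ^ ((s - 1) / 2) * 5 ^ ((k - s - 1) / 2)
  else 16 * 17 ^ ((s - 1) / 2) * 5 ^ ((k - s - 2) / 2)

/-!
Passing from `(k - 2, s - 1)` to `(k, s)` raises both `s - 1` and `k - s - 1` by one, so it flips
both parities. When `s - 1` is even the factor gained is exactly `8`. When `s - 1` is odd, the
common powers of `17` and `5` cancel, leaving `8 * 4 ≤ 2 * 17`, `8 * 8 ≤ 17 * 5` or
`8 * 16 ≤ 2 * 17 * 5` according as `k - s - 1` is zero, odd, or even and positive.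
-/

-- The parities in these names are those of `s` and `k - s`, in this order.
theorem f_even_even (a b : ℕ) : f (2 * a + 2 * b) (2 * a) = 17 ^ a * 5 ^ b := by
  simp [f]

theorem f_even_odd (a b : ℕ) : f (2 * a + (2 * b + 1)) (2 * a) = 2 * 17 ^ a * 5 ^ b := by
  simp [f]

theorem f_odd_self (a : ℕ) : f (2 * a + 1) (2 * a + 1) = 4 * 17 ^ a := by
  simp [f]

theorem f_odd_odd (a b : ℕ) :
    f (2 * a + 1 + (2 * b + 1)) (2 * a + 1) = 8 * 17 ^ a * 5 ^ b := by
  simp [f]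

theorem f_odd_even (a b : ℕ) :
    f (2 * a + 1 + (2 * b + 2)) (2 * a + 1) = 16 * 17 ^ a * 5 ^ b := by
  simp [f, parity_simps]

theorem eight_mul_f_even (a d : ℕ) :
    8 * f (2 * a + d) (2 * a) = f (2 * a + 1 + (d + 1)) (2 * a + 1) := by
  obtain ⟨b, rfl | rfl⟩ := d.even_or_odd'
  · rw [f_even_even, f_odd_odd]
    ring
  · rw [f_even_odd, f_odd_even]
    ring

theorem eight_mul_f_odd_self_le (a : ℕ) :
    8 * f (2 * a + 1) (2 * a + 1) ≤ f (2 * (a + 1) + 1) (2 * (a + 1)) := by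
  calc 8 * f (2 * a + 1) (2 * a + 1) = 32 * 17 ^ a := by rw [f_odd_self]; ring
    _ ≤ 34 * 17 ^ a := by gcongr; norm_num
    _ = f (2 * (a + 1) + 1) (2 * (a + 1)) := by rw [f_even_odd (a + 1) 0]; ring

theorem eight_mul_f_odd_odd_le (a b : ℕ) :
    8 * f (2 * a + 1 + (2 * b + 1)) (2 * a + 1) ≤
      f (2 * (a + 1) + 2 * (b + 1)) (2 * (a + 1)) := by
  calc 8 * f (2 * a + 1 + (2 * b + 1)) (2 * a + 1)
    _ = 64 * (17 ^ a * 5 ^ b) := by rw [f_odd_odd]; ring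
    _ ≤ 85 * (17 ^ a * 5 ^ b) := by gcongr; norm_num
    _ = f (2 * (a + 1) + 2 * (b + 1)) (2 * (a + 1)) := by rw [f_even_even]; ring

theorem eight_mul_f_odd_even_le (a b : ℕ) :
    8 * f (2 * a + 1 + (2 * b + 2)) (2 * a + 1) ≤
      f (2 * (a + 1) + (2 * (b + 1) + 1)) (2 * (a + 1)) := by
  calc 8 * f (2 * a + 1 + (2 * b + 2)) (2 * a + 1)
    _ = 128 * (17 ^ a * 5 ^ b) := by rw [f_odd_even]; ring
    _ ≤ 170 * (17 ^ a * 5 ^ b) := by gcongr; norm_num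
    _ = f (2 * (a + 1) + (2 * (b + 1) + 1)) (2 * (a + 1)) := by rw [f_even_odd]; ring

theorem eight_mul_f_odd_le (a d : ℕ) :
    8 * f (2 * a + 1 + d) (2 * a + 1) ≤ f (2 * a + 2 + (d + 1)) (2 * a + 2) := by
  obtain ⟨b, rfl | rfl⟩ := d.even_or_odd'
  · cases b with
    | zero => exact eight_mul_f_odd_self_le a
    | succ b => exact eight_mul_f_odd_even_le a b
  · exact eight_mul_f_odd_odd_le a b

theorem f_ineq_four (k s : ℕ) (hk : 3 ≤ k) (hs1 : 1 ≤ s) (hs2 : s ≤ k - 1) :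
    8 * f (k - 2) (s - 1) ≤ f k s := by
  obtain ⟨t, rfl⟩ := Nat.exists_eq_add_of_le' hs1
  obtain ⟨d, rfl⟩ : ∃ d, k = t + 1 + (d + 1) := ⟨k - (t + 2), by omega⟩
  have k_sub_two : t + 1 + (d + 1) - 2 = t + d := by omega
  rw [k_sub_two, Nat.add_sub_cancel]
  obtain ⟨a, rfl | rfl⟩ := t.even_or_odd'
  · exact (eight_mul_f_even a d).le
  · exact eight_mul_f_odd_le a d
end
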